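/- Let Λ_a ⊆ P = ℤ[x_1,…,x_a] be the subring of symmetric polynomials, acting on P by multiplication. Then every Λ_a-module endomorphism of P lies in the subring of End_{Λ_a}(P) generated by the multiplication operators M_1,…,M_a (where M_j(f) = x_j·f) together with the divided difference operators ∂_1,…,∂_{a−1}; that is, these operators generate End_{Λ_a}(P) as a ring. -/

import Mathlib

/-! The multiplication operators `M_j` and the divided difference operators
`∂_i` generate `End_{Λ_a}(P)` as a ring, where `P = ℤ[x_1,…,x_a]` and `Λ_a` is
the subring of symmetric polynomials.  Variables are 0-indexed by `Fin a`. -/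

open MvPolynomial

/-- Abstract nil-Hecke relations. -/
structure NilHecke {L P : Type} [CommRing L] [CommRing P] [Algebra L P] (a : ℕ)
    (d : ℕ → Module.End L P) (x : ℕ → P) : Prop where
  sq : ∀ i f, d i (d i f) = 0
  comm : ∀ i j f, i + 1 < j → d i (d j f) = d j (d i f)
  braid : ∀ i f, d i (d (i+1) (d i f)) = d (i+1) (d i (d (i+1) f))
  leib : ∀ i f, i + 1 < a → d i (x (i+1) * f) = x i * d i f - f
  far : ∀ i k f, i + 1 < k → d i (x k * f) = x k * d i f

namespace NilHecke

variable {L P : Type} [CommRing L] [CommRing P] [Algebra L P] {a : ℕ}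
    {d : ℕ → Module.End L P} {x : ℕ → P}

/-- `d j ∘ d (j+1) ∘ ⋯ ∘ d (j+n-1)` -/
def U (d : ℕ → Module.End L P) : ℕ → ℕ → Module.End L P
  | _, 0 => 1
  | j, n+1 => d j * U d (j+1) n

/-- longest element operator -/
def T (d : ℕ → Module.End L P) : ℕ → Module.End L P
  | 0 => 1
  | m+1 => U d 0 m * T d m

theorem U_succ (j n : ℕ) (f : P) : U d j (n+1) f = d j (U d (j+1) n f) := rfl

theorem U_comm (h : NilHecke a d x) (i : ℕ) : ∀ (n j : ℕ) (f : P), i + 1 < j →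
    d i (U d j n f) = U d j n (d i f)
  | 0, j, f, _ => rfl
  | n+1, j, f, hj => by
    rw [U_succ, U_succ, h.comm i j _ hj, U_comm h i n (j+1) f (by omega)]

theorem U_far (h : NilHecke a d x) (k : ℕ) : ∀ (n j : ℕ) (f : P), j + n < k →
    U d j n (x k * f) = x k * U d j n f
  | 0, j, f, _ => rfl
  | n+1, j, f, hj => by
    rw [U_succ, U_succ, U_far h k n (j+1) f (by omega), h.far _ _ _ (by omega)]

theorem T_far (h : NilHecke a d x) (k : ℕ) : ∀ (m : ℕ) (f : P), m ≤ k →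
    T d m (x k * f) = x k * T d m f
  | 0, f, _ => rfl
  | m+1, f, hj => by
    change U d 0 m (T d m (x k * f)) = x k * U d 0 m (T d m f)
    rw [T_far h k m f (by omega), U_far h k _ _ _ (by omega)]

theorem key (h : NilHecke a d x) (m : ℕ) (hm : m < a) (f : P)
    (hf : ∀ i, i + 1 < m → d i f = 0) : ∀ (n j : ℕ), j + n + 1 = m →
    U d j (n+1) (x m * f) = x j * U d j (n+1) f - U d (j+1) n f
  | 0, j, hj => by
    subst hj
    exact h.leib j f hm
  | n+1, j, hj => by
    rw [U_succ, key h m hm f hf n (j+1) (by omega), map_sub, h.leib _ _ (by omega),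
      U_comm h j n (j+1+1) f (by omega), hf j (by omega), map_zero, sub_zero]
    rfl

theorem killed (h : NilHecke a d x) (m : ℕ) (f : P)
    (hf : ∀ i, i + 1 < m → d i f = 0) : ∀ (n j i : ℕ), j + n = m → j ≤ i → i < m →
    d i (U d j n f) = 0
  | 0, j, i, h1, h2, h3 => by omega
  | n+1, j, i, h1, h2, h3 => by
    rcases Nat.lt_trichotomy i (j+1) with h4 | h4 | h4
    · obtain rfl : i = j := by omega
      rw [U_succ, h.sq]
    · subst h4
      obtain ⟨n, rfl⟩ : ∃ k, n = k + 1 := ⟨n - 1, by omega⟩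
      rw [U_succ, U_succ, ← h.braid, U_comm h j n (j+1+1) f (by omega), hf j (by omega)]
      simp
    · rw [U_succ, ← h.comm j i _ h4, killed h m f hf n (j+1) i (by omega) (by omega) h3, map_zero]

theorem T_killed (h : NilHecke a d x) (f : P) : ∀ (m i : ℕ), i + 1 < m → d i (T d m f) = 0
  | 0, i, hi => by omega
  | m+1, i, hi => killed h m (T d m f) (fun i hi => T_killed h f m i hi) m 0 i (by omega)
      (by omega) (by omega)

/-- additive span of `b T c` -/
def N (S : Module.End L P) : AddSubgroup (Module.End L P) :=
  AddSubgroup.closure {Z | ∃ b c : P, Z = LinearMap.mulLeft L b * S * LinearMap.mulLeft L c}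

theorem N_sandwich {S Z : Module.End L P} (hZ : Z ∈ N S) (b c : P) :
    LinearMap.mulLeft L b * Z * LinearMap.mulLeft L c ∈ N S := by
  induction hZ using AddSubgroup.closure_induction with
  | mem Z hZ =>
    obtain ⟨b', c', rfl⟩ := hZ
    refine AddSubgroup.subset_closure ⟨b * b', c' * c, ?_⟩
    ext f
    simp [mul_assoc]
  | zero => simp [zero_mem]
  | add y z _ _ hy hz => rw [mul_add, add_mul]; exact add_mem hy hz
  | neg y _ hy =>
    have e : LinearMap.mulLeft L b * -y * LinearMap.mulLeft L c =
        -(LinearMap.mulLeft L b * y * LinearMap.mulLeft L c) := by ext f; simp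
    rw [e]; exact neg_mem hy

theorem N_self (S : Module.End L P) : S ∈ N S :=
  AddSubgroup.subset_closure ⟨1, 1, by ext f; simp⟩

theorem N_trans {S S' : Module.End L P} (hS : S ∈ N S') : N S ≤ N S' := by
  refine (AddSubgroup.closure_le _).2 ?_
  rintro _ ⟨b, c, rfl⟩
  exact N_sandwich hS b c

theorem step (h : NilHecke a d x) (m : ℕ) (hm : m < a) : ∀ (j n : ℕ), j + n = m →
    U d j n * T d m ∈ N (T d (m+1))
  | 0, n, hj => by
    obtain rfl : n = m := by omega
    exact N_self _
  | j+1, n, hj => by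
    have ih := step h m hm j (n+1) (by omega)
    have e : U d (j+1) n * T d m =
        LinearMap.mulLeft L (x j) * (U d j (n+1) * T d m) * LinearMap.mulLeft L 1 -
        LinearMap.mulLeft L 1 * (U d j (n+1) * T d m) * LinearMap.mulLeft L (x m) := by
      ext f
      have := key h m hm (T d m f) (fun i hi => T_killed h f m i hi) n j (by omega)
      simp [T_far h m m f le_rfl, this]
    rw [e]
    exact sub_mem (N_sandwich ih _ _) (N_sandwich ih _ _)

theorem one_mem (h : NilHecke a d x) : ∀ m, m ≤ a → (1 : Module.End L P) ∈ N (T d m)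
  | 0, _ => N_self _
  | m+1, hm => by
    refine N_trans ?_ (one_mem h m (by omega))
    simpa [U] using step h m (by omega) m 0 rfl

theorem main (h : NilHecke a d x) (R : Subring (Module.End L P))
    (hM : ∀ p, LinearMap.mulLeft L p ∈ R) (hd : ∀ i, d i ∈ R)
    (hinv : ∀ f, (∀ i, i + 1 < a → d i f = 0) → ∃ l : L, f = algebraMap L P l) : R = ⊤ := by
  have hU : ∀ n j, U d j n ∈ R := by
    intro n
    induction n with
    | zero => intro j; exact R.one_mem
    | succ n ih => intro j; exact mul_mem (hd j) (ih _)
  have hT : ∀ m, T d m ∈ R := by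
    intro m
    induction m with
    | zero => exact R.one_mem
    | succ m ih => exact mul_mem (hU _ _) ih
  rw [eq_top_iff]
  rintro φ -
  have : ∀ Z ∈ N (T d a), φ * Z ∈ R := by
    intro Z hZ
    induction hZ using AddSubgroup.closure_induction with
    | mem Z hZ =>
      obtain ⟨b, c, rfl⟩ := hZ
      have : φ * (LinearMap.mulLeft L b * T d a * LinearMap.mulLeft L c) =
          LinearMap.mulLeft L (φ b) * T d a * LinearMap.mulLeft L c := by
        ext f
        obtain ⟨l, hl⟩ := hinv (T d a (c * f)) (fun i hi => T_killed h _ a i hi)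
        simp only [Module.End.mul_apply, LinearMap.mulLeft_apply, hl]
        rw [mul_comm, ← Algebra.smul_def, map_smul, Algebra.smul_def, mul_comm]
      rw [this]
      exact mul_mem (mul_mem (hM _) (hT _)) (hM _)
    | zero => simp [zero_mem]
    | add y z _ _ hy hz => rw [mul_add]; exact add_mem hy hz
    | neg y _ hy =>
      have e : φ * -y = -(φ * y) := by ext f; simp
      rw [e]; exact neg_mem hy
  simpa using this 1 (one_mem h a le_rfl)

end NilHecke

set_option maxHeartbeats 4000000 in
theorem stmt7 (a : ℕ) (ha : 1 ≤ a)
    -- a family of Λ_a-linear operators satisfying the divided-difference property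
    (D : (i : ℕ) → i + 1 < a →
      (MvPolynomial (Fin a) ℤ →ₗ[↥(MvPolynomial.symmetricSubalgebra (Fin a) ℤ)]
        MvPolynomial (Fin a) ℤ))
    (hD : ∀ (i : ℕ) (hi : i + 1 < a) (f : MvPolynomial (Fin a) ℤ),
      (X (⟨i, by omega⟩ : Fin a) - X (⟨i + 1, hi⟩ : Fin a)) * D i hi f =
        f - rename (Equiv.swap (⟨i, by omega⟩ : Fin a) (⟨i + 1, hi⟩ : Fin a)) f) :
    Subring.closure
      (Set.range (fun j : Fin a =>
          (LinearMap.mulLeft ↥(MvPolynomial.symmetricSubalgebra (Fin a) ℤ) (X j) :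
            Module.End ↥(MvPolynomial.symmetricSubalgebra (Fin a) ℤ)
              (MvPolynomial (Fin a) ℤ)))
        ∪ {g | ∃ (i : ℕ) (hi : i + 1 < a), g = D i hi}) = ⊤ := by
  classical
  -- cancel nonzero differences
  have canc : ∀ (i j : Fin a), i ≠ j → ∀ f g : MvPolynomial (Fin a) ℤ,
      (X i - X j) * f = (X i - X j) * g → f = g := by
    intro i j hij f g hfg
    refine mul_left_cancel₀ ?_ hfg
    rw [sub_ne_zero]
    exact fun e => hij (X_injective e)
  obtain ⟨d, hd⟩ : ∃ d : ℕ → Module.End (symmetricSubalgebra (Fin a) ℤ) (MvPolynomial (Fin a) ℤ),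
      d = fun i => if h : i + 1 < a then D i h else 0 := ⟨_, rfl⟩
  have d_pos : ∀ i (hi : i + 1 < a), d i = D i hi := by intro i hi; simp [hd, hi]
  have d_neg : ∀ i, ¬ (i + 1 < a) → d i = 0 := by intro i hi; simp [hd, hi]
  obtain ⟨x, hx⟩ : ∃ x : ℕ → MvPolynomial (Fin a) ℤ,
      x = fun i => if h : i < a then X ⟨i, h⟩ else 0 := ⟨_, rfl⟩
  have x_pos : ∀ i (hi : i < a), x i = X ⟨i, hi⟩ := by intro i hi; simp [hx, hi]
  have x_neg : ∀ i, ¬ (i < a) → x i = 0 := by intro i hi; simp [hx, hi]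
  -- the swaps as ring homs
  obtain ⟨s, hs⟩ : ∃ s : ℕ → (MvPolynomial (Fin a) ℤ →ₐ[ℤ] MvPolynomial (Fin a) ℤ),
      s = fun i => if h : i + 1 < a then
        rename (Equiv.swap (⟨i, by omega⟩ : Fin a) ⟨i+1, h⟩) else AlgHom.id _ _ := ⟨_, rfl⟩
  have s_pos : ∀ i (hi : i + 1 < a), s i =
      rename (Equiv.swap (⟨i, by omega⟩ : Fin a) ⟨i+1, hi⟩) := by intro i hi; simp [hs, hi]
  have hdd : ∀ i, i + 1 < a → ∀ f, (x i - x (i+1)) * d i f = f - s i f := by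
    intro i hi f
    rw [x_pos i (by omega), x_pos (i+1) hi, d_pos i hi, s_pos i hi]
    exact hD i hi f
  have xc : ∀ i j, i < a → j < a → i ≠ j → ∀ f g, (x i - x j) * f = (x i - x j) * g → f = g := by
    intro i j hi hj hij f g
    rw [x_pos i hi, x_pos j hj]
    exact canc _ _ (by simpa using hij) f g
  have s1 : ∀ i, i + 1 < a → s i (x i) = x (i+1) := by
    intro i hi
    rw [x_pos i (by omega), x_pos (i+1) hi, s_pos i hi]
    simp
  have s2 : ∀ i, i + 1 < a → s i (x (i+1)) = x i := by
    intro i hi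
    rw [x_pos i (by omega), x_pos (i+1) hi, s_pos i hi]
    simp
  have s3 : ∀ i k, i + 1 < a → k ≠ i → k ≠ i + 1 → s i (x k) = x k := by
    intro i k hi h1 h2
    by_cases hk : k < a
    · rw [x_pos k hk, s_pos i hi, rename_X, Equiv.swap_apply_of_ne_of_ne]
      · simpa using h1
      · simpa using h2
    · rw [x_neg k hk, map_zero]
  have ss : ∀ i, i + 1 < a → ∀ f, s i (s i f) = f := by
    intro i hi f
    rw [s_pos i hi, rename_rename]
    have : (⇑(Equiv.swap (⟨i, by omega⟩ : Fin a) ⟨i+1, hi⟩) ∘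
      ⇑(Equiv.swap (⟨i, by omega⟩ : Fin a) ⟨i+1, hi⟩)) = id := by
      ext1 k; simp
    rw [this, rename_id_apply]
  have scomm : ∀ i j, i + 1 < j → j + 1 < a → ∀ f, s i (s j f) = s j (s i f) := by
    intro i j hij hj f
    rw [s_pos i (by omega), s_pos j hj, rename_rename, rename_rename]
    congr 2
    ext1 k
    simp only [Function.comp, Equiv.swap_apply_def, Fin.ext_iff]
    grind
  have sbraid : ∀ i, i + 1 + 1 < a → ∀ f, s i (s (i+1) (s i f)) = s (i+1) (s i (s (i+1) f)) := by
    intro i hi f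
    rw [s_pos i (by omega), s_pos (i+1) hi]
    simp only [rename_rename]
    congr 2
    ext1 k
    simp only [Function.comp, Equiv.swap_apply_def, Fin.ext_iff]
    grind
  have H : NilHecke a d x := by
    refine ⟨?_, ?_, ?_, ?_, ?_⟩
    · intro i f
      by_cases hi : i + 1 < a
      · apply xc i (i+1) (by omega) hi (by omega)
        apply xc i (i+1) (by omega) hi (by omega)
        have h1 := hdd i hi (d i f)
        have h2 := hdd i hi f
        have h3 := congrArg (s i) h2
        simp only [map_mul, map_sub, s1 i hi, s2 i hi, ss i hi] at h3
        linear_combination (x i - x (i+1)) * h1 + h2 + h3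
      · simp [d_neg i hi]
    · intro i j f hij
      by_cases hj : j + 1 < a
      · have hi : i + 1 < a := by omega
        apply xc i (i+1) (by omega) hi (by omega)
        apply xc j (j+1) (by omega) hj (by omega)
        have h1 := hdd i hi (d j f)
        have h2 := hdd j hj f
        have h3 := congrArg (s i) h2
        have h4 := hdd j hj (d i f)
        have h5 := hdd i hi f
        have h6 := congrArg (s j) h5
        simp only [map_mul, map_sub, s3 i j hi (by omega) (by omega),
          s3 i (j+1) hi (by omega) (by omega)] at h3
        simp only [map_mul, map_sub, s3 j i hj (by omega) (by omega),
          s3 j (i+1) hj (by omega) (by omega)] at h6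
        have h7 := scomm i j hij hj f
        linear_combination (x j - x (j+1)) * h1 + h2 - h3 - (x i - x (i+1)) * h4 - h5 + h6 + h7
      · simp [d_neg j hj]
    · intro i f
      by_cases hi2 : i + 1 + 1 < a
      · have hi : i + 1 < a := by omega
        have A1 := s1 i hi
        have A2 := s2 i hi
        have A3 := s3 i (i+1+1) hi (by omega) (by omega)
        have B1 := s1 (i+1) hi2
        have B2 := s2 (i+1) hi2
        have B3 := s3 (i+1) i hi2 (by omega) (by omega)
        have hb := sbraid i hi2 f
        have huu := ss i hi
        have htt := ss (i+1) hi2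
        have c1 := xc i (i+1) (by omega) hi (by omega)
        have c2 := xc (i+1) (i+1+1) (by omega) hi2 (by omega)
        have c3 := xc i (i+1+1) (by omega) hi2 (by omega)
        have e1 := hdd i hi
        have e2 := hdd (i+1) hi2
        generalize x (i+1+1) = z at *
        generalize x (i+1) = y at *
        generalize x i = w at *
        generalize s (i+1) = t at *
        generalize s i = u at *
        generalize d (i+1) = q at *
        generalize d i = p at *
        have L : (w - y) * ((y - z) * ((w - z) * p (q (p f)))) =
            f - u f - t f + t (u f) + u (t f) - u (t (u f)) := by
          apply c1
          have h1 := e1 f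
          have h2 := e2 (p f)
          have h3 := e1 (q (p f))
          have h4 := congrArg t h1
          simp only [map_mul, map_sub, B1, B2, B3] at h4
          have h5 : (y - z) * ((w - y) * ((w - z) * q (p f))) =
              (w - z) * (f - u f) - (w - y) * (t f - t (u f)) := by
            linear_combination (w - y) * (w - z) * h2 + (w - z) * h1 - (w - y) * h4
          have h6 := congrArg u h5
          simp only [map_mul, map_sub, A1, A2, A3, huu] at h6
          linear_combination (w - y) * (y - z) * (w - z) * h3 + h5 + h6
        have R : (w - y) * ((y - z) * ((w - z) * q (p (q f)))) =
            f - u f - t f + t (u f) + u (t f) - t (u (t f)) := by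
          apply c2
          have h1 := e2 f
          have h2 := e1 (q f)
          have h3 := e2 (p (q f))
          have h4 := congrArg u h1
          simp only [map_mul, map_sub, A1, A2, A3] at h4
          have h5 : (y - z) * ((w - y) * ((w - z) * p (q f))) =
              (w - z) * (f - t f) - (y - z) * (u f - u (t f)) := by
            linear_combination (y - z) * (w - z) * h2 + (w - z) * h1 - (y - z) * h4
          have h6 := congrArg t h5
          simp only [map_mul, map_sub, B1, B2, B3, htt] at h6
          linear_combination (w - y) * (y - z) * (w - z) * h3 + h5 + h6
        apply c3
        apply c2
        apply c1
        linear_combination L - R - hb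
      · simp [d_neg (i+1) hi2]
    · intro i f hi
      apply xc i (i+1) (by omega) hi (by omega)
      have h1 := hdd i hi (x (i+1) * f)
      have h2 := hdd i hi f
      rw [map_mul (s i), s2 i hi] at h1
      linear_combination h1 - x i * h2
    · intro i k f hik
      by_cases hi : i + 1 < a
      · apply xc i (i+1) (by omega) hi (by omega)
        have h1 := hdd i hi (x k * f)
        have h2 := hdd i hi f
        rw [map_mul (s i), s3 i k hi (by omega) (by omega)] at h1
        linear_combination h1 - x k * h2
      · simp [d_neg i hi]
  apply H.main
  · intro p
    induction p using MvPolynomial.induction_on with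
    | C z =>
      have : LinearMap.mulLeft (symmetricSubalgebra (Fin a) ℤ) (C z : MvPolynomial (Fin a) ℤ) =
          ((z : ℤ) : Module.End (symmetricSubalgebra (Fin a) ℤ) (MvPolynomial (Fin a) ℤ)) := by
        ext1 f
        simp
      rw [this]
      exact intCast_mem _ z
    | add p q hp hq =>
      have : LinearMap.mulLeft (symmetricSubalgebra (Fin a) ℤ) (p + q) =
        LinearMap.mulLeft (symmetricSubalgebra (Fin a) ℤ) p +
        LinearMap.mulLeft (symmetricSubalgebra (Fin a) ℤ) q := by
        ext1 f; simp [add_mul]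
      rw [this]
      exact add_mem hp hq
    | mul_X p j hp =>
      have : LinearMap.mulLeft (symmetricSubalgebra (Fin a) ℤ) (p * X j) =
        LinearMap.mulLeft (symmetricSubalgebra (Fin a) ℤ) p *
        LinearMap.mulLeft (symmetricSubalgebra (Fin a) ℤ) (X j) := by
        ext1 f; simp [mul_assoc]
      rw [this]
      exact mul_mem hp (Subring.subset_closure (Or.inl ⟨j, rfl⟩))
  · intro i
    by_cases hi : i + 1 < a
    · rw [d_pos i hi]
      exact Subring.subset_closure (Or.inr ⟨i, hi, rfl⟩)
    · rw [d_neg i hi]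
      exact zero_mem _
  · intro f hf
    suffices hsym : f ∈ symmetricSubalgebra (Fin a) ℤ from ⟨⟨f, hsym⟩, rfl⟩
    rw [mem_symmetricSubalgebra]
    obtain ⟨n, rfl⟩ : ∃ n, a = n + 1 := ⟨a - 1, by omega⟩
    intro σ
    have hσ : σ ∈ Submonoid.closure (Set.range fun i : Fin n => Equiv.swap i.castSucc i.succ) := by
      rw [Equiv.Perm.mclosure_swap_castSucc_succ]; trivial
    induction hσ using Submonoid.closure_induction with
    | mem τ hτ =>
      obtain ⟨i, rfl⟩ := hτ
      have hi : (i : ℕ) + 1 < n + 1 := by omega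
      have h1 := hdd i hi f
      rw [hf i hi, mul_zero, s_pos i hi] at h1
      exact (sub_eq_zero.1 h1.symm).symm
    | one => simp
    | mul τ ρ _ _ h1 h2 =>
      rw [Equiv.Perm.coe_mul, ← rename_rename, h2, h1]
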